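/- For every nonempty binary string S and every integer r ≥ 1, there exists a finite contiguous substring b of the infinite string A_r = (0^r 1^r)^∞ such that 3·LCS(S, b) − |S| − |b| ≥ −|S|/2. Consequently, adv(S, A_r) ≥ −1/2, where adv(S, A_r) denotes the supremum of adv(S, b') over all finite contiguous substrings b' of A_r. -/

import Mathlib

/-- The length of a longest common subsequence of `x` and `y`. -/
noncomputable def LCS {α : Type*} (x y : List α) : ℕ :=
  sSup {n | ∃ u : List α, u.Sublist x ∧ u.Sublist y ∧ u.length = n}

/-- The contiguous substring of the infinite alternating binary string `A_r = (0^r 1^r)^∞`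
starting at (0-indexed) position `i` and having length `m`. -/
def altSeg (r i m : ℕ) : List Bool :=
  (List.range m).map (fun t => decide (((i + t) / r) % 2 = 1))

/-- Advantage of `a` over `b`: `(3·LCS(a,b) − |a| − |b|) / |a|`. -/
noncomputable def advR (a b : List Bool) : ℝ :=
  (3 * (LCS a b : ℝ) - a.length - b.length) / a.length

/-- Advantage of `a` to the infinite alternating string `A_r`: the supremum of the
advantage of `a` over all finite contiguous substrings of `A_r`. -/
noncomputable def advInf (a : List Bool) (r : ℕ) : ℝ :=
  sSup {x : ℝ | ∃ i m : ℕ, x = advR a (altSeg r i m)}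

/-!
Cut `A_r` at positions `i` and `i + r` into two segments of length `|S|`. They are bitwise
complements of each other, so each letter of `S` agrees with the letter at the same position of
exactly one of them. The agreeing letters form common subsequences, so one of the two segments has
an LCS with `S` of length at least `|S| / 2`.
-/

section LCS

variable {α : Type*}

theorem bddAbove_length_common_sublist (x y : List α) :
    BddAbove {n | ∃ u : List α, u.Sublist x ∧ u.Sublist y ∧ u.length = n} := by
  refine ⟨x.length, ?_⟩
  rintro _ ⟨u, hux, -, rfl⟩
  exact hux.length_le

theorem length_le_lcs {u x y : List α} (hux : u.Sublist x) (huy : u.Sublist y) :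
    u.length ≤ LCS x y :=
  le_csSup (bddAbove_length_common_sublist x y) ⟨u, hux, huy, rfl⟩

theorem exists_sublist_length_eq_lcs (x y : List α) :
    ∃ u : List α, u.Sublist x ∧ u.Sublist y ∧ u.length = LCS x y :=
  Nat.sSup_mem (s := {n | ∃ u : List α, u.Sublist x ∧ u.Sublist y ∧ u.length = n})
    ⟨0, [], x.nil_sublist, y.nil_sublist, rfl⟩ (bddAbove_length_common_sublist x y)

theorem lcs_le_length_left (x y : List α) : LCS x y ≤ x.length := by
  obtain ⟨u, hux, -, hu⟩ := exists_sublist_length_eq_lcs x y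
  exact hu ▸ hux.length_le

theorem lcs_mono {x x' y y' : List α} (hx : x.Sublist x') (hy : y.Sublist y') :
    LCS x y ≤ LCS x' y' := by
  obtain ⟨u, hux, huy, hu⟩ := exists_sublist_length_eq_lcs x y
  exact hu ▸ length_le_lcs (hux.trans hx) (huy.trans hy)

theorem lcs_add_one_le_lcs_cons_cons (a : α) (x y : List α) :
    LCS x y + 1 ≤ LCS (a :: x) (a :: y) := by
  obtain ⟨u, hux, huy, hu⟩ := exists_sublist_length_eq_lcs x y
  exact hu ▸ length_le_lcs (hux.cons_cons a) (huy.cons_cons a)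

theorem length_le_lcs_map_add_lcs_map {ι : Type*} (f g h : ι → α) (l : List ι)
    (hf : ∀ t ∈ l, f t = g t ∨ f t = h t) :
    l.length ≤ LCS (l.map f) (l.map g) + LCS (l.map f) (l.map h) := by
  induction l with
  | nil => exact Nat.zero_le _
  | cons t l ih =>
    have tail_le := ih fun s hs => hf s (List.mem_cons_of_mem t hs)
    have cons_mono (k : ι → α) :
        LCS (l.map f) (l.map k) ≤ LCS (f t :: l.map f) (k t :: l.map k) :=
      lcs_mono (List.sublist_cons_self _ _) (List.sublist_cons_self _ _)
    have cons_succ (k : ι → α) (hk : f t = k t) :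
        LCS (l.map f) (l.map k) + 1 ≤ LCS (f t :: l.map f) (k t :: l.map k) :=
      hk ▸ lcs_add_one_le_lcs_cons_cons (f t) _ _
    simp only [List.map_cons, List.length_cons]
    rcases hf t List.mem_cons_self with hg | hh
    · linarith [cons_succ g hg, cons_mono h]
    · linarith [cons_mono g, cons_succ h hh]

theorem length_le_lcs_add_lcs_map_not {x y : List Bool} (hxy : x.length = y.length) :
    x.length ≤ LCS x y + LCS x (y.map not) := by
  have h := length_le_lcs_map_add_lcs_map Prod.fst Prod.snd (not ∘ Prod.snd) (x.zip y)
    fun p _ => Bool.eq_or_eq_not p.1 p.2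
  rwa [← List.map_map, List.map_fst_zip hxy.le, List.map_snd_zip hxy.ge, List.length_zip,
    ← hxy, min_self] at h

end LCS

theorem length_altSeg (r i m : ℕ) : (altSeg r i m).length = m := by
  simp [altSeg]

theorem altSeg_add_eq_map_not {r : ℕ} (hr : 0 < r) (i m : ℕ) :
    altSeg r (i + r) m = (altSeg r i m).map not := by
  have block_succ (t : ℕ) : (i + r + t) / r = (i + t) / r + 1 := by
    rw [Nat.add_right_comm, Nat.add_div_right _ hr]
  simp only [altSeg, List.map_map, Function.comp_def, block_succ, ← decide_not,
    Nat.succ_mod_two_eq_one_iff, Nat.mod_two_ne_one]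

theorem exists_length_le_two_mul_lcs_altSeg {r : ℕ} (hr : 0 < r) (S : List Bool) :
    ∃ i, S.length ≤ 2 * LCS S (altSeg r i S.length) := by
  have h := length_le_lcs_add_lcs_map_not (length_altSeg r 0 S.length).symm
  rw [← altSeg_add_eq_map_not hr] at h
  rcases le_total (LCS S (altSeg r 0 S.length)) (LCS S (altSeg r (0 + r) S.length)) with hle | hle
  · exact ⟨0 + r, by lia⟩
  · exact ⟨0, by lia⟩

theorem advR_le_two (a b : List Bool) : advR a b ≤ 2 := by
  have hlcs : (LCS a b : ℝ) ≤ a.length := mod_cast lcs_le_length_left a b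
  refine div_le_of_le_mul₀ a.length.cast_nonneg zero_le_two ?_
  linarith [(b.length.cast_nonneg : (0 : ℝ) ≤ b.length)]

theorem advR_le_advInf (a : List Bool) (r i m : ℕ) : advR a (altSeg r i m) ≤ advInf a r := by
  refine le_csSup ⟨2, ?_⟩ ⟨i, m, rfl⟩
  rintro _ ⟨j, k, rfl⟩
  exact advR_le_two _ _

theorem stmt8 (S : List Bool) (hS : S ≠ []) (r : ℕ) (hr : 1 ≤ r) :
    (∃ i m : ℕ,
      -((S.length : ℝ) / 2) ≤
        3 * (LCS S (altSeg r i m) : ℝ) - S.length - (altSeg r i m).length) ∧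
    -(1 / 2 : ℝ) ≤ advInf S r := by
  obtain ⟨i, hi⟩ := exists_length_le_two_mul_lcs_altSeg hr S
  have hlcs : (S.length : ℝ) ≤ 2 * LCS S (altSeg r i S.length) := mod_cast hi
  have hbound : -((S.length : ℝ) / 2) ≤ 3 * (LCS S (altSeg r i S.length) : ℝ) - S.length -
      (altSeg r i S.length).length := by
    rw [length_altSeg]
    linarith
  refine ⟨⟨i, S.length, hbound⟩, le_trans ?_ (advR_le_advInf S r i S.length)⟩
  have hpos : (0 : ℝ) < S.length := mod_cast List.length_pos_iff.mpr hS
  rw [advR, le_div_iff₀ hpos]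
  linarith
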